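/- arXiv:0904.2547 — 2 statements merged into one kernel-verified Lean document; each statement's English description precedes it below -/
import Mathlib

section
/- Let γ > 0, ε > 0, and let u₀ : ℝ → ℝ be a twice continuously differentiable 1-periodic function with ∫₀¹ u₀(x) dx = 0. Let T₁ be the smallest positive root of 2√γ T₁ (‖u₀‖_{L∞} + γ T₁ ‖u₀‖_{L²})^{1/2} = log(1 + 2/ε), and assume there exists x₀ ∈ ℝ with u₀'(x₀) ≤ −(1+ε) √γ (‖u₀‖_{L∞} + γ T₁ ‖u₀‖_{L²})^{1/2}. Then wave breaking occurs before T₁: every periodic classical solution u of the Ostrovsky–Hunter equation on [0,T) with u(0,·) = u₀ and with u_x bounded from below on [0,T) × ℝ has T < T₁. -/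
open MeasureTheory Filter Set intervalIntegral

/-- A periodic (period `1` in `x`) classical solution of the Ostrovsky–Hunter
equation `(u_t + u u_x)_x = γ u` on the set `S` of times (typically `[0,T)`):
`u` is `1`-periodic in `x`, continuously differentiable in `t`, twice
continuously differentiable in `x`, with `u_tx` continuous, and the expanded
equation `u_tx + u_x² + u u_xx = γ u` holds pointwise at positive times of `S`. -/
structure IsPeriodicOHSolution (γ : ℝ) (S : Set ℝ) (u : ℝ → ℝ → ℝ) : Prop where
  periodic : ∀ t ∈ S, ∀ x : ℝ, u t (x + 1) = u t x
  diff_t : ∀ t ∈ S, ∀ x : ℝ, DifferentiableAt ℝ (fun s => u s x) t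
  diff_x : ∀ t ∈ S, ∀ x : ℝ, DifferentiableAt ℝ (u t) x
  diff_xx : ∀ t ∈ S, ∀ x : ℝ, DifferentiableAt ℝ (deriv (u t)) x
  diff_tx : ∀ t ∈ S, ∀ x : ℝ, DifferentiableAt ℝ (fun y => deriv (fun s => u s y) t) x
  cont_u : ContinuousOn (fun p : ℝ × ℝ => u p.1 p.2) (S ×ˢ (Set.univ : Set ℝ))
  cont_ut : ContinuousOn (fun p : ℝ × ℝ => deriv (fun s => u s p.2) p.1)
      (S ×ˢ (Set.univ : Set ℝ))
  cont_ux : ContinuousOn (fun p : ℝ × ℝ => deriv (u p.1) p.2) (S ×ˢ (Set.univ : Set ℝ))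
  cont_uxx : ContinuousOn (fun p : ℝ × ℝ => deriv (deriv (u p.1)) p.2)
      (S ×ˢ (Set.univ : Set ℝ))
  cont_utx : ContinuousOn (fun p : ℝ × ℝ => deriv (fun y => deriv (fun s => u s y) p.1) p.2)
      (S ×ˢ (Set.univ : Set ℝ))
  eqn : ∀ t ∈ S, 0 < t → ∀ x : ℝ,
    deriv (fun y => deriv (fun s => u s y) t) x
      + (deriv (u t) x) ^ 2 + u t x * deriv (deriv (u t)) x = γ * u t x


open Topology

lemma oh_leibniz {F F' : ℝ → ℝ → ℝ} {s : Set ℝ} {x₀ a b : ℝ} (hs : IsOpen s) (hx : x₀ ∈ s)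
    (hF : ∀ x ∈ s, ContinuousOn (F x) (uIcc a b))
    (hF' : ContinuousOn (fun p : ℝ × ℝ => F' p.1 p.2) (s ×ˢ uIcc a b))
    (hd : ∀ x ∈ s, ∀ t ∈ uIcc a b, HasDerivAt (fun y => F y t) (F' x t) x) :
    HasDerivAt (fun x => ∫ t in a..b, F x t) (∫ t in a..b, F' x₀ t) x₀ := by
  obtain ⟨r, hr, hrs⟩ := Metric.nhds_basis_closedBall.mem_iff.1 (hs.mem_nhds hx)
  have hK : IsCompact (Metric.closedBall x₀ r ×ˢ uIcc a b) :=
    (isCompact_closedBall x₀ r).prod isCompact_uIcc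
  obtain ⟨C, hC⟩ := hK.exists_bound_of_continuousOn (hF'.mono (prod_mono hrs subset_rfl))
  have hsub : Set.uIoc a b ⊆ uIcc a b := uIoc_subset_uIcc
  have hF'0 : ContinuousOn (F' x₀) (uIcc a b) :=
    hF'.comp (f := fun t => (x₀, t)) (by fun_prop) (fun t ht => ⟨hx, ht⟩)
  refine (intervalIntegral.hasDerivAt_integral_of_dominated_loc_of_deriv_le
    (F := F) (F' := F') (bound := fun _ => C) (Metric.closedBall_mem_nhds x₀ hr)
    ?_ ?_ ?_ ?_ ?_ ?_).2
  · filter_upwards [hs.mem_nhds hx] with x hx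
    exact ((hF x hx).mono hsub).aestronglyMeasurable measurableSet_uIoc
  · exact (hF x₀ hx).intervalIntegrable
  · exact (hF'0.mono hsub).aestronglyMeasurable measurableSet_uIoc
  · exact Eventually.of_forall fun t ht x hx => hC (x, t) ⟨hx, hsub ht⟩
  · exact intervalIntegrable_const
  · exact Eventually.of_forall fun t ht x hx => hd x (hrs hx) t (hsub ht)

lemma oh_chain {f f₁ f₂ : ℝ → ℝ → ℝ} {s : Set ℝ} (hs : IsOpen s) {t : ℝ} (ht : t ∈ s)
    (h1 : ∀ t ∈ s, ∀ x, HasDerivAt (fun r => f r x) (f₁ t x) t)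
    (h2 : ∀ t ∈ s, ∀ x, HasDerivAt (f t) (f₂ t x) x)
    (c1 : ContinuousOn (fun p : ℝ × ℝ => f₁ p.1 p.2) (s ×ˢ univ))
    (c2 : ContinuousOn (fun p : ℝ × ℝ => f₂ p.1 p.2) (s ×ˢ univ))
    {X : ℝ → ℝ} {X' : ℝ} (hX : HasDerivAt X X' t) :
    HasDerivAt (fun r => f r (X r)) (f₁ t (X t) + f₂ t (X t) * X') t := by
  have hn : s ×ˢ (univ : Set ℝ) ∈ 𝓝 (t, X t) := (hs.prod isOpen_univ).mem_nhds ⟨ht, trivial⟩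
  let T : ℝ →L[ℝ] (ℝ →L[ℝ] ℝ) := ContinuousLinearMap.toSpanSingletonCLE.toContinuousLinearMap
  have key := hasStrictFDerivAt_uncurry_coprod (𝕜 := ℝ) (u := (t, X t)) (f := f)
    (f₁ := fun a b => ContinuousLinearMap.toSpanSingleton ℝ (f₁ a b))
    (f₂ := fun a b => ContinuousLinearMap.toSpanSingleton ℝ (f₂ a b))
    (by filter_upwards [hn] with p hp using (h1 p.1 hp.1 p.2).hasFDerivAt)
    (by filter_upwards [hn] with p hp using (h2 p.1 hp.1 p.2).hasFDerivAt)
    (by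
      have := c1.continuousAt hn
      exact (T.continuous.continuousAt).comp this)
    (by
      have := c2.continuousAt hn
      exact (T.continuous.continuousAt).comp this)
  have h3 := key.hasFDerivAt.comp_hasDerivAt t ((hasDerivAt_id t).prodMk hX)
  refine h3.congr_deriv ?_
  rw [ContinuousLinearMap.coprod_apply]
  change (1:ℝ) * (f₁ t (X t)) + X' * f₂ t (X t) = _
  ring

lemma oh_mixed {f ft fx ftx : ℝ → ℝ → ℝ} {a b : ℝ}
    (h1 : ∀ t ∈ Ioo a b, ∀ x, HasDerivAt (fun r => f r x) (ft t x) t)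
    (h2 : ∀ t ∈ Ioo a b, ∀ x, HasDerivAt (f t) (fx t x) x)
    (h3 : ∀ t ∈ Ioo a b, ∀ x, HasDerivAt (ft t) (ftx t x) x)
    (c1 : ContinuousOn (fun p : ℝ × ℝ => ft p.1 p.2) (Ioo a b ×ˢ univ))
    (c3 : ContinuousOn (fun p : ℝ × ℝ => ftx p.1 p.2) (Ioo a b ×ˢ univ))
    {t : ℝ} (ht : t ∈ Ioo a b) (x : ℝ) :
    HasDerivAt (fun r => fx r x) (ftx t x) t := by
  have hft : ∀ y, ContinuousOn (fun r => ft r y) (Ioo a b) := fun y =>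
    c1.comp (f := fun r => (r, y)) (by fun_prop) (fun r hr => ⟨hr, trivial⟩)
  have hftx : ∀ y, ContinuousOn (fun r => ftx r y) (Ioo a b) := fun y =>
    c3.comp (f := fun r => (r, y)) (by fun_prop) (fun r hr => ⟨hr, trivial⟩)
  have key : ∀ s ∈ Ioo a b, fx s x = fx t x + ∫ r in t..s, ftx r x := by
    intro s hs
    have hsub : uIcc t s ⊆ Ioo a b := ordConnected_Ioo.uIcc_subset ht hs
    have hL := oh_leibniz (F := fun y r => ft r y) (F' := fun y r => ftx r y) (s := univ)
      (x₀ := x) (a := t) (b := s) isOpen_univ trivial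
      (fun y _ => (hft y).mono hsub)
      (c3.comp (f := fun p : ℝ × ℝ => (p.2, p.1)) (by fun_prop) (fun p hp => ⟨hsub hp.2, trivial⟩))
      (fun y _ r hr => h3 r (hsub hr) y)
    have heq : (fun y => ∫ r in t..s, ft r y) = fun y => f s y - f t y := by
      funext y
      exact integral_eq_sub_of_hasDerivAt (fun r hr => h1 r (hsub hr) y)
        ((hft y).mono hsub).intervalIntegrable
    rw [heq] at hL
    have := hL.unique ((h2 s hs x).sub (h2 t ht x))
    linarith
  have hF : HasDerivAt (fun s => fx t x + ∫ r in t..s, ftx r x) (ftx t x) t := by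
    refine (integral_hasDerivAt_right (by simp) ?_ ?_).const_add _
    · exact (hftx x).stronglyMeasurableAtFilter isOpen_Ioo t ht
    · exact (hftx x).continuousAt (Ioo_mem_nhds ht.1 ht.2)
  refine hF.congr_of_eventuallyEq ?_
  filter_upwards [Ioo_mem_nhds ht.1 ht.2] with s hs using key s hs

lemma oh_riccati {V V' : ℝ → ℝ} {b k T : ℝ} (hb : 0 ≤ b) (hbT : b < T) (hk : 0 < k)
    (hV : ContinuousOn V (Icc 0 b))
    (hd : ∀ t ∈ Ioo 0 b, HasDerivAt V (V' t) t)
    (hle : ∀ t ∈ Ioo 0 b, V' t ≤ - V t ^ 2 + k ^ 2)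
    (h0 : V 0 ≤ - k * Real.cosh (k * (T - 0)) / Real.sinh (k * (T - 0))) :
    V b ≤ - k * Real.cosh (k * (T - b)) / Real.sinh (k * (T - b)) := by
  have hSpos : ∀ t ∈ Icc 0 b, 0 < Real.sinh (k * (T - t)) := fun t ht =>
    Real.sinh_pos_iff.2 (mul_pos hk (by linarith [ht.2]))
  set W : ℝ → ℝ := IccExtend hb (domRestrict (Icc 0 b) V) with hW
  have hWc : Continuous W := (continuousOn_iff_continuous_domRestrict.1 hV).Icc_extend'
  have hWV : ∀ t ∈ Icc 0 b, W t = V t := fun t ht => by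
    rw [hW, IccExtend_of_mem hb _ ht]; rfl
  let A : ℝ → ℝ := fun t => ∫ r in (0:ℝ)..t, W r
  have hA : ∀ t, HasDerivAt A (W t) t := fun t =>
    integral_hasDerivAt_right (hWc.intervalIntegrable _ _)
      (hWc.stronglyMeasurableAtFilter _ _) hWc.continuousAt
  let G : ℝ → ℝ := fun t => (V t * Real.sinh (k * (T - t)) + k * Real.cosh (k * (T - t))) *
    Real.exp (A t)
  have hAc : Continuous A := continuous_iff_continuousAt.2 fun t => (hA t).continuousAt
  have hGc : ContinuousOn G (Icc 0 b) := by
    refine ContinuousOn.mul (ContinuousOn.add (hV.mul ?_) ?_) ?_ <;>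
    · apply Continuous.continuousOn; fun_prop
  have hGd : ∀ t ∈ Ioo 0 b, HasDerivAt G
      ((V' t + V t ^ 2 - k ^ 2) * Real.sinh (k * (T - t)) * Real.exp (A t)) t := by
    intro t ht
    have hl : HasDerivAt (fun t => k * (T - t)) (-k) t := by
      simpa using ((hasDerivAt_id t).const_sub T).const_mul k
    have := (((hd t ht).mul hl.sinh).add (hl.cosh.const_mul k)).mul (hA t).exp
    refine this.congr_deriv ?_
    simp only [Pi.add_apply, Pi.mul_apply]
    rw [hWV t (Ioo_subset_Icc_self ht)]
    ring
  have hanti : AntitoneOn G (Icc 0 b) := by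
    refine antitoneOn_of_deriv_nonpos (convex_Icc _ _) hGc ?_ ?_
    · rw [interior_Icc]
      exact fun t ht => (hGd t ht).differentiableAt.differentiableWithinAt
    · rw [interior_Icc]
      intro t ht
      rw [(hGd t ht).deriv]
      have h1 := hle t ht
      have h2 := hSpos t (Ioo_subset_Icc_self ht)
      have : 0 ≤ (-(V' t + V t ^ 2 - k ^ 2)) * Real.sinh (k * (T - t)) * Real.exp (A t) := by
        have : 0 ≤ -(V' t + V t ^ 2 - k ^ 2) := by linarith
        positivity
      linarith
  have h1 := hanti (left_mem_Icc.2 hb) (right_mem_Icc.2 hb) hb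
  have hS0 := hSpos 0 (left_mem_Icc.2 hb)
  have hSb := hSpos b (right_mem_Icc.2 hb)
  have hG0 : G 0 ≤ 0 := by
    rw [le_div_iff₀ hS0] at h0
    exact mul_nonpos_of_nonpos_of_nonneg (by linarith) (Real.exp_pos _).le
  have hGb : G b ≤ 0 := h1.trans hG0
  have := nonpos_of_mul_nonpos_left hGb (Real.exp_pos _)
  rw [le_div_iff₀ hSb]
  linarith

lemma oh_cs {v : ℝ → ℝ} (hv : Continuous v) :
    ∫ x in (0:ℝ)..1, |v x| ≤ Real.sqrt (∫ x in (0:ℝ)..1, v x ^ 2) := by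
  apply Real.le_sqrt_of_sq_le
  set m := ∫ x in (0:ℝ)..1, |v x| with hm
  have h0 : 0 ≤ ∫ x in (0:ℝ)..1, (|v x| - m) ^ 2 :=
    intervalIntegral.integral_nonneg zero_le_one fun x _ => sq_nonneg _
  have h1 : ∫ x in (0:ℝ)..1, (|v x| - m) ^ 2 = 
      ∫ x in (0:ℝ)..1, ((v x ^ 2 - (2 * m) * |v x|) + m ^ 2) := by
    congr 1; funext x; rw [← sq_abs (v x)]; ring
  rw [h1, intervalIntegral.integral_add, intervalIntegral.integral_sub,
    intervalIntegral.integral_const_mul, ← hm] at h0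
  · simp at h0; nlinarith
  all_goals apply Continuous.intervalIntegrable; fun_prop

lemma oh_spatial {γ : ℝ} (hγ : 0 < γ) {v vx vxx q qx : ℝ → ℝ}
    (hv : ∀ x, HasDerivAt v (vx x) x) (hvx : ∀ x, HasDerivAt vx (vxx x) x)
    (hq : ∀ x, HasDerivAt q (qx x) x)
    (pv : ∀ x, v (x + 1) = v x) (pvx : ∀ x, vx (x + 1) = vx x) (pq : ∀ x, q (x + 1) = q x)
    (heq : ∀ x, qx x + vx x ^ 2 + v x * vxx x = γ * v x) :
    (∫ x in (0:ℝ)..1, v x) = 0 ∧ (∫ x in (0:ℝ)..1, 2 * v x * q x) = 0 ∧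
    ((∫ x in (0:ℝ)..1, q x) = 0 → ∀ x,
      |q x + v x * vx x| ≤ γ * Real.sqrt (∫ x in (0:ℝ)..1, v x ^ 2)) := by
  have cv : Continuous v := continuous_iff_continuousAt.2 fun x => (hv x).continuousAt
  have cvx : Continuous vx := continuous_iff_continuousAt.2 fun x => (hvx x).continuousAt
  have cq : Continuous q := continuous_iff_continuousAt.2 fun x => (hq x).continuousAt
  have hw : ∀ x, HasDerivAt (fun x => q x + v x * vx x) (γ * v x) x := fun x =>
    ((hq x).add ((hv x).mul (hvx x))).congr_deriv (by rw [← heq x]; ring)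
  have pw : ∀ x, q (x + 1) + v (x + 1) * vx (x + 1) = q x + v x * vx x := fun x => by
    rw [pv, pvx, pq]
  have p0 : v 1 = v 0 := by simpa using pv 0
  have px0 : vx 1 = vx 0 := by simpa using pvx 0
  have pq0 : q 1 = q 0 := by simpa using pq 0
  have iw : ∀ a b : ℝ, ∫ x in a..b, γ * v x = (q b + v b * vx b) - (q a + v a * vx a) :=
    fun a b => integral_eq_sub_of_hasDerivAt (fun x _ => hw x)
      (Continuous.intervalIntegrable (by fun_prop) _ _)
  refine ⟨?_, ?_, ?_⟩
  · have := iw 0 1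
    rw [p0, px0, pq0, intervalIntegral.integral_const_mul, sub_self] at this
    exact (mul_eq_zero.1 this).resolve_left hγ.ne'
  · have hd : ∀ x, HasDerivAt (fun x => (q x + v x * vx x) ^ 2 / γ - 2 / 3 * v x ^ 3)
        (2 * v x * q x) x := fun x =>
      ((((hw x).pow 2).div_const γ).sub (((hv x).pow 3).const_mul (2/3))).congr_deriv (by
        push_cast; field_simp; ring)
    rw [integral_eq_sub_of_hasDerivAt (fun x _ => hd x)
      (Continuous.intervalIntegrable (by fun_prop) _ _), p0, px0, pq0, sub_self]
  · intro hq0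
    have hwz : ∫ x in (0:ℝ)..1, (q x + v x * vx x) = 0 := by
      rw [intervalIntegral.integral_add (cq.intervalIntegrable _ _)
        (Continuous.intervalIntegrable (by fun_prop) _ _), hq0]
      have hd : ∀ x, HasDerivAt (fun x => v x ^ 2 / 2) (v x * vx x) x := fun x =>
        (((hv x).pow 2).div_const 2).congr_deriv (by push_cast; ring)
      rw [integral_eq_sub_of_hasDerivAt (fun x _ => hd x)
        (Continuous.intervalIntegrable (by fun_prop) _ _), p0]
      simp
    have hdiff : ∀ x ∈ Icc (0:ℝ) 1, ∀ y ∈ Icc (0:ℝ) 1,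
        |(q x + v x * vx x) - (q y + v y * vx y)| ≤ γ * ∫ x in (0:ℝ)..1, |v x| := by
      intro x hx y hy
      rw [← iw y x]
      have hsub : Set.uIoc y x ⊆ Set.uIoc 0 1 := by
        rw [Set.uIoc_of_le zero_le_one]
        exact fun z hz => ⟨(le_min hy.1 hx.1).trans_lt hz.1, hz.2.trans (max_le hy.2 hx.2)⟩
      calc ‖∫ x in y..x, γ * v x‖ ≤ |∫ x in y..x, ‖γ * v x‖| :=
            intervalIntegral.norm_integral_le_abs_integral_norm
        _ ≤ |∫ x in (0:ℝ)..1, ‖γ * v x‖| :=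
            intervalIntegral.abs_integral_mono_interval hsub
              (Eventually.of_forall fun x => norm_nonneg _)
              (Continuous.intervalIntegrable (by fun_prop) _ _)
        _ = γ * ∫ x in (0:ℝ)..1, |v x| := by
            rw [abs_of_nonneg (intervalIntegral.integral_nonneg zero_le_one
              fun x _ => norm_nonneg _), ← intervalIntegral.integral_const_mul]
            congr 1; funext x; rw [norm_mul, Real.norm_of_nonneg hγ.le, Real.norm_eq_abs]
    have h01 : ∀ x ∈ Icc (0:ℝ) 1, |q x + v x * vx x| ≤ γ * ∫ x in (0:ℝ)..1, |v x| := by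
      intro x hx
      have e : ∫ y in (0:ℝ)..1, ((q x + v x * vx x) - (q y + v y * vx y)) =
          q x + v x * vx x := by
        rw [intervalIntegral.integral_sub intervalIntegrable_const
          (Continuous.intervalIntegrable (by fun_prop) _ _), hwz]
        simp
      have := intervalIntegral.norm_integral_le_of_norm_le_const (a := (0:ℝ)) (b := 1)
        (f := fun y => (q x + v x * vx x) - (q y + v y * vx y))
        (C := γ * ∫ x in (0:ℝ)..1, |v x|) (fun y hy => by
          rw [Set.uIoc_of_le zero_le_one] at hy
          exact hdiff x hx y (Ioc_subset_Icc_self hy))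
      rw [e] at this
      simpa using this
    intro x
    obtain ⟨y, hy, hxy⟩ := Function.Periodic.exists_mem_Ico₀
      (f := fun x => q x + v x * vx x) (c := 1) pw one_pos x
    rw [hxy]
    exact (h01 y (Ico_subset_Icc_self hy)).trans (mul_le_mul_of_nonneg_left (oh_cs cv) hγ.le)

lemma oh_bdd {f : ℝ → ℝ → ℝ} {b T : ℝ} (hbT : b < T)
    (hf : ContinuousOn (fun p : ℝ × ℝ => f p.1 p.2) (Ico 0 T ×ˢ univ))
    (hp : ∀ t ∈ Ico 0 T, ∀ x, f t (x + 1) = f t x) :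
    ∃ B : NNReal, ∀ t ∈ Icc 0 b, ∀ x, ‖f t x‖ ≤ B := by
  have hK : IsCompact (Icc 0 b ×ˢ Icc (0:ℝ) 1) := isCompact_Icc.prod isCompact_Icc
  obtain ⟨C, hC⟩ := hK.exists_bound_of_continuousOn (hf.mono (prod_mono
    (fun t ht => ⟨ht.1, ht.2.trans_lt hbT⟩) (subset_univ _)))
  refine ⟨C.toNNReal, fun t ht x => ?_⟩
  obtain ⟨y, hy, hxy⟩ := Function.Periodic.exists_mem_Ico₀
      (f := f t) (c := 1) (hp t ⟨ht.1, ht.2.trans_lt hbT⟩) one_pos x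
  rw [hxy]
  exact (hC (t, y) ⟨ht, Ico_subset_Icc_self hy⟩).trans (Real.le_coe_toNNReal C)

lemma oh_ode {u : ℝ → ℝ → ℝ} {b T : ℝ} (hb : 0 ≤ b) (hbT : b < T)
    (cu : ContinuousOn (fun p : ℝ × ℝ => u p.1 p.2) (Ico 0 T ×ˢ univ))
    (cux : ContinuousOn (fun p : ℝ × ℝ => deriv (u p.1) p.2) (Ico 0 T ×ˢ univ))
    (hu : ∀ t ∈ Ico 0 T, Differentiable ℝ (u t))
    (hp : ∀ t ∈ Ico 0 T, ∀ x, u t (x + 1) = u t x)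
    (hpx : ∀ t ∈ Ico 0 T, ∀ x, deriv (u t) (x + 1) = deriv (u t) x) (x₀ : ℝ) :
    ∃ X : ℝ → ℝ, X 0 = x₀ ∧ ∀ t ∈ Icc 0 b, HasDerivWithinAt X (u t (X t)) (Icc 0 b) t := by
  obtain ⟨B, hB⟩ := oh_bdd hbT cu hp
  obtain ⟨K, hK⟩ := oh_bdd (f := fun t x => deriv (u t) x) hbT cux hpx
  have hT : ∀ t ∈ Icc 0 b, t ∈ Ico 0 T := fun t ht => ⟨ht.1, ht.2.trans_lt hbT⟩
  have hPL : IsPicardLindelof u (tmin := 0) (tmax := b) ⟨0, left_mem_Icc.2 hb⟩ x₀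
      (B * b.toNNReal) 0 B K := by
    refine ⟨fun t ht => ?_, fun x _ => ?_, fun t ht x _ => hB t ht x, ?_⟩
    · exact (lipschitzWith_of_nnnorm_deriv_le (hu t (hT t ht)) (hK t ht)).lipschitzOnWith
    · exact cu.comp (f := fun t => (t, x)) (by fun_prop) (fun t ht => ⟨hT t ht, trivial⟩)
    · simp [hb]
  exact hPL.exists_eq_forall_mem_Icc_hasDerivWithinAt₀

lemma oh_w_bound {γ T : ℝ} (hγ : 0 < γ) {u : ℝ → ℝ → ℝ}
    (h : IsPeriodicOHSolution γ (Ico 0 T) u)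
    {t : ℝ} (ht : t ∈ Ioo 0 T) (x : ℝ) :
    |deriv (fun s => u s x) t + u t x * deriv (u t) x| ≤
      γ * Real.sqrt (∫ x in (0:ℝ)..1, u 0 x ^ 2) := by
  have hI : ∀ t ∈ Ioo 0 T, t ∈ Ico 0 T := fun t ht => Ioo_subset_Ico_self ht
  have hsp := fun t (ht : t ∈ Ioo 0 T) => oh_spatial (γ := γ) hγ (v := u t) (vx := deriv (u t))
    (vxx := deriv (deriv (u t))) (q := fun y => deriv (fun s => u s y) t)
    (qx := deriv (fun y => deriv (fun s => u s y) t))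
    (fun x => (h.diff_x t (hI t ht) x).hasDerivAt)
    (fun x => (h.diff_xx t (hI t ht) x).hasDerivAt)
    (fun x => (h.diff_tx t (hI t ht) x).hasDerivAt)
    (h.periodic t (hI t ht))
    (fun x => by
      rw [← deriv_comp_add_const]; congr 1; funext y; exact h.periodic t (hI t ht) y)
    (fun x => by
      apply Filter.EventuallyEq.deriv_eq
      filter_upwards [Ioo_mem_nhds ht.1 ht.2] with s hs using h.periodic s (hI s hs) x)
    (h.eqn t (hI t ht) ht.1)
  have cut : ∀ t ∈ Ico 0 T, Continuous (u t) := fun t ht =>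
    continuous_iff_continuousAt.2 fun x => (h.diff_x t ht x).continuousAt
  have csub : Ioo 0 T ×ˢ uIcc (0:ℝ) 1 ⊆ Ico 0 T ×ˢ univ :=
    prod_mono Ioo_subset_Ico_self (subset_univ _)
  have hut : (∫ x in (0:ℝ)..1, deriv (fun s => u s x) t) = 0 := by
    have h1 := oh_leibniz (F := u) (F' := fun t x => deriv (fun s => u s x) t) (s := Ioo 0 T)
      (a := 0) (b := 1) isOpen_Ioo ht (fun t ht => (cut t (hI t ht)).continuousOn)
      (h.cont_ut.mono csub) (fun t ht x _ => (h.diff_t t (hI t ht) x).hasDerivAt)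
    have h2 : HasDerivAt (fun t => ∫ x in (0:ℝ)..1, u t x) 0 t := by
      refine (hasDerivAt_const t (0:ℝ)).congr_of_eventuallyEq ?_
      filter_upwards [Ioo_mem_nhds ht.1 ht.2] with s hs using (hsp s hs).1
    exact h1.unique h2
  have hL2 : (∫ x in (0:ℝ)..1, u t x ^ 2) = ∫ x in (0:ℝ)..1, u 0 x ^ 2 := by
    have hcont : ContinuousOn (fun t => ∫ x in (0:ℝ)..1, u t x ^ 2) (Icc 0 t) := by
      have hpc : Continuous (fun p : ℝ × ℝ => u (max 0 (min p.1 t)) p.2 ^ 2) := by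
        refine Continuous.pow ?_ 2
        exact h.cont_u.comp_continuous (f := fun p : ℝ × ℝ => (max 0 (min p.1 t), p.2))
          (by fun_prop) (fun p => ⟨⟨le_max_left _ _, max_lt (ht.1.trans ht.2)
            ((min_le_right _ _).trans_lt ht.2)⟩, trivial⟩)
      have := intervalIntegral.continuous_parametric_intervalIntegral_of_continuous'
        (μ := volume) (f := fun s x => u (max 0 (min s t)) x ^ 2) hpc 0 1
      refine this.continuousOn.congr fun s hs => ?_
      simp only [min_eq_left hs.2, max_eq_right hs.1]
    obtain ⟨c, hc, hc'⟩ := exists_hasDerivAt_eq_slope _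
      (fun t => ∫ x in (0:ℝ)..1, 2 * u t x * deriv (fun s => u s x) t) ht.1 hcont (by
        intro s hs
        have hs' : s ∈ Ioo 0 T := ⟨hs.1, hs.2.trans ht.2⟩
        refine oh_leibniz (F := fun t x => u t x ^ 2)
          (F' := fun t x => 2 * u t x * deriv (fun s => u s x) t) (s := Ioo 0 T)
          (a := 0) (b := 1) isOpen_Ioo hs' (fun t ht => ((cut t (hI t ht)).pow 2).continuousOn)
          ?_ (fun t ht x _ => (((h.diff_t t (hI t ht) x).hasDerivAt).pow 2).congr_deriv
            (by push_cast; ring))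
        exact (continuousOn_const.mul (h.cont_u.mono csub)).mul (h.cont_ut.mono csub))
    have hz := (hsp c ⟨hc.1, hc.2.trans ht.2⟩).2.1
    rw [hz, eq_comm, div_eq_zero_iff] at hc'
    rcases hc' with h' | h'
    · linarith
    · linarith [ht.1]
  rw [← hL2]
  exact (hsp t ht).2.2 hut x

lemma oh_char {γ T b k : ℝ} (hγ : 0 < γ) {u : ℝ → ℝ → ℝ}
    (h : IsPeriodicOHSolution γ (Ico 0 T) u) (hb : 0 ≤ b) (hbT : b < T) (x₀ : ℝ)
    {M T₁ : ℝ} (hM : |u 0 x₀| ≤ M) (hbT₁ : b < T₁) (hk : 0 < k)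
    (hkk : k ^ 2 = γ * (M + γ * T₁ * Real.sqrt (∫ x in (0:ℝ)..1, u 0 x ^ 2)))
    (h0 : deriv (u 0) x₀ ≤ - k * Real.cosh (k * (T₁ - 0)) / Real.sinh (k * (T₁ - 0))) :
    ∃ x, deriv (u b) x ≤ - k * Real.cosh (k * (T₁ - b)) / Real.sinh (k * (T₁ - b)) := by
  have hI : ∀ t ∈ Ioo 0 T, t ∈ Ico 0 T := fun t ht => Ioo_subset_Ico_self ht
  have hIb : ∀ t ∈ Icc 0 b, t ∈ Ico 0 T := fun t ht => ⟨ht.1, ht.2.trans_lt hbT⟩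
  have hOb : ∀ t ∈ Ioo 0 b, t ∈ Ioo 0 T := fun t ht => ⟨ht.1, ht.2.trans hbT⟩
  have csub : Ioo 0 T ×ˢ (univ : Set ℝ) ⊆ Ico 0 T ×ˢ univ :=
    prod_mono Ioo_subset_Ico_self (subset_univ _)
  obtain ⟨X, hX0, hX⟩ := oh_ode hb hbT h.cont_u h.cont_ux (fun t ht x => h.diff_x t ht x)
    h.periodic (fun t ht x => by
      rw [← deriv_comp_add_const]; congr 1; funext y; exact h.periodic t ht y) x₀
  have hXc : ContinuousOn X (Icc 0 b) := fun t ht => (hX t ht).continuousWithinAt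
  have hXd : ∀ t ∈ Ioo 0 b, HasDerivAt X (u t (X t)) t := fun t ht =>
    (hX t (Ioo_subset_Icc_self ht)).hasDerivAt (Icc_mem_nhds ht.1 ht.2)
  have hpc : ContinuousOn (fun t => (t, X t)) (Icc 0 b) := continuousOn_id.prodMk hXc
  have hmaps : MapsTo (fun t => (t, X t)) (Icc 0 b) (Ico 0 T ×ˢ univ) :=
    fun t ht => ⟨hIb t ht, trivial⟩
  set L := Real.sqrt (∫ x in (0:ℝ)..1, u 0 x ^ 2) with hL
  have hL0 : 0 ≤ L := Real.sqrt_nonneg _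
  have hUd : ∀ t ∈ Ioo 0 b, HasDerivAt (fun t => u t (X t))
      (deriv (fun s => u s (X t)) t + deriv (u t) (X t) * u t (X t)) t := fun t ht =>
    oh_chain (f := u) (f₁ := fun t x => deriv (fun s => u s x) t) (f₂ := fun t x => deriv (u t) x)
      isOpen_Ioo (hOb t ht) (fun t ht x => (h.diff_t t (hI t ht) x).hasDerivAt)
      (fun t ht x => (h.diff_x t (hI t ht) x).hasDerivAt)
      (h.cont_ut.mono csub) (h.cont_ux.mono csub) (hXd t ht)
  have hUc : ContinuousOn (fun t => u t (X t)) (Icc 0 b) := h.cont_u.comp hpc hmaps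
  have hVc : ContinuousOn (fun t => deriv (u t) (X t)) (Icc 0 b) := h.cont_ux.comp hpc hmaps
  have hUb : ∀ t ∈ Ioo 0 b, u t (X t) ≤ M + γ * T₁ * L := by
    intro t ht
    obtain ⟨c, hc, hc'⟩ := exists_hasDerivAt_eq_slope (fun t => u t (X t)) _ ht.1
      (hUc.mono (Icc_subset_Icc_right ht.2.le)) (fun s hs => hUd s ⟨hs.1, hs.2.trans ht.2⟩)
    have hw := oh_w_bound hγ h (hOb c ⟨hc.1, hc.2.trans ht.2⟩) (X c)
    rw [mul_comm (deriv (u c) (X c))] at hc'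
    rw [hc', ← hL] at hw
    have h1 := (abs_le.1 hw).2
    simp only [sub_zero] at h1
    rw [div_le_iff₀ ht.1, hX0] at h1
    have h2 := (abs_le.1 hM).2
    have h3 : γ * L * t ≤ γ * L * T₁ :=
      mul_le_mul_of_nonneg_left (ht.2.trans hbT₁).le (by positivity)
    linarith
  have hVd : ∀ t ∈ Ioo 0 b, HasDerivAt (fun t => deriv (u t) (X t))
      (deriv (fun y => deriv (fun s => u s y) t) (X t)
        + deriv (deriv (u t)) (X t) * u t (X t)) t := fun t ht =>
    oh_chain (f := fun t x => deriv (u t) x)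
      (f₁ := fun t x => deriv (fun y => deriv (fun s => u s y) t) x)
      (f₂ := fun t x => deriv (deriv (u t)) x)
      isOpen_Ioo (hOb t ht) (fun t ht x =>
        oh_mixed (f := u) (ft := fun t x => deriv (fun s => u s x) t)
          (fx := fun t x => deriv (u t) x)
          (ftx := fun t x => deriv (fun y => deriv (fun s => u s y) t) x)
          (fun t ht x => (h.diff_t t (hI t ht) x).hasDerivAt)
          (fun t ht x => (h.diff_x t (hI t ht) x).hasDerivAt)
          (fun t ht x => (h.diff_tx t (hI t ht) x).hasDerivAt)
          (h.cont_ut.mono csub) (h.cont_utx.mono csub) ht x)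
      (fun t ht x => (h.diff_xx t (hI t ht) x).hasDerivAt)
      (h.cont_utx.mono csub) (h.cont_uxx.mono csub) (hXd t ht)
  refine ⟨X b, oh_riccati (V := fun t => deriv (u t) (X t)) hb hbT₁ hk hVc hVd ?_ ?_⟩
  · intro t ht
    have e := h.eqn t (hI t (hOb t ht)) ht.1 (X t)
    have h1 := mul_le_mul_of_nonneg_left (hUb t ht) hγ.le
    rw [hkk]
    linarith
  · simpa only [hX0] using h0

lemma oh_coth {k T ε : ℝ} (hε : 0 < ε) (hT : 0 < k * T)
    (h : 2 * (k * T) = Real.log (1 + 2 / ε)) :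
    Real.cosh (k * T) / Real.sinh (k * T) = 1 + ε := by
  have hs : 0 < Real.sinh (k * T) := Real.sinh_pos_iff.2 hT
  rw [div_eq_iff hs.ne', Real.cosh_eq, Real.sinh_eq]
  have he : Real.exp (k * T) * Real.exp (k * T) = 1 + 2 / ε := by
    rw [← Real.exp_add, ← two_mul, h, Real.exp_log (by positivity)]
  have hn : Real.exp (-(k * T)) * Real.exp (k * T) = 1 := by
    rw [← Real.exp_add]; simp
  have hp := Real.exp_pos (k * T)
  apply mul_right_cancel₀ hp.ne'
  have : ε * (Real.exp (k * T) * Real.exp (k * T)) = ε + 2 := by rw [he]; field_simp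
  linear_combination (-1/2) * this + (1/2 + (1 + ε)/2) * hn

/-- wave breaking via characteristics.  If `T₁` is the smallest positive
root of `2√γ T₁ (‖u₀‖_{L∞} + γ T₁ ‖u₀‖_{L²})^{1/2} = log(1 + 2/ε)` and some
`u₀'(x₀) ≤ -(1+ε)√γ (‖u₀‖_{L∞} + γ T₁ ‖u₀‖_{L²})^{1/2}`, then every periodic classical
solution with initial data `u₀` and `u_x` bounded from below has `T < T₁`. -/
theorem wave_breaking_characteristics
    (γ ε : ℝ) (hγ : 0 < γ) (hε : 0 < ε)
    (u₀ : ℝ → ℝ) (hreg : ContDiff ℝ 2 u₀) (hper : ∀ x : ℝ, u₀ (x + 1) = u₀ x)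
    (hmean : (∫ x in (0:ℝ)..1, u₀ x) = 0)
    (T₁ : ℝ) (hT₁pos : 0 < T₁)
    (hroot : 2 * Real.sqrt γ * T₁ *
        Real.sqrt ((⨆ y : ℝ, |u₀ y|) + γ * T₁ * Real.sqrt (∫ x in (0:ℝ)..1, (u₀ x) ^ 2))
      = Real.log (1 + 2 / ε))
    (hsmallest : ∀ T' : ℝ, 0 < T' →
      2 * Real.sqrt γ * T' *
          Real.sqrt ((⨆ y : ℝ, |u₀ y|) + γ * T' * Real.sqrt (∫ x in (0:ℝ)..1, (u₀ x) ^ 2))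
        = Real.log (1 + 2 / ε) → T₁ ≤ T')
    (x₀ : ℝ)
    (hslope : deriv u₀ x₀ ≤ -(1 + ε) * Real.sqrt γ *
      Real.sqrt ((⨆ y : ℝ, |u₀ y|) + γ * T₁ * Real.sqrt (∫ x in (0:ℝ)..1, (u₀ x) ^ 2))) :
    ∀ (T : ℝ) (u : ℝ → ℝ → ℝ),
      IsPeriodicOHSolution γ (Set.Ico 0 T) u →
      u 0 = u₀ →
      (∃ c : ℝ, ∀ t ∈ Set.Ico (0 : ℝ) T, ∀ x : ℝ, c ≤ deriv (u t) x) →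
      T < T₁ := by
  intro T u h hu0 ⟨c, hc⟩
  by_contra hT
  push Not at hT
  set M := ⨆ y : ℝ, |u₀ y| with hMdef
  set L := Real.sqrt (∫ x in (0:ℝ)..1, (u₀ x) ^ 2) with hLdef
  have hL0 : 0 ≤ L := Real.sqrt_nonneg _
  have hM0 : 0 ≤ M := Real.iSup_nonneg fun y => abs_nonneg _
  have hsum : 0 ≤ M + γ * T₁ * L := by positivity
  set k := Real.sqrt γ * Real.sqrt (M + γ * T₁ * L) with hkdef
  have hlog : 0 < Real.log (1 + 2 / ε) := Real.log_pos (by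
    have : 0 < 2 / ε := by positivity
    linarith)
  have hroot' : 2 * (k * T₁) = Real.log (1 + 2 / ε) := by rw [← hroot, hkdef]; ring
  have hkT : 0 < k * T₁ := by linarith
  have hk : 0 < k := pos_of_mul_pos_left hkT hT₁pos.le
  have hkk : k ^ 2 = γ * (M + γ * T₁ * L) := by
    rw [hkdef, mul_pow, Real.sq_sqrt hγ.le, Real.sq_sqrt hsum]
  have hbdd : BddAbove (range fun y => |u₀ y|) := by
    obtain ⟨C, hC⟩ := isCompact_Icc.exists_bound_of_continuousOn
      (hreg.continuous.continuousOn (s := Icc (0:ℝ) 1))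
    refine ⟨C, ?_⟩
    rintro _ ⟨x, rfl⟩
    obtain ⟨y, hy, hxy⟩ := Function.Periodic.exists_mem_Ico₀
      (f := u₀) (c := 1) hper one_pos x
    simp only [hxy]
    exact hC y (Ico_subset_Icc_self hy)
  have hlim : Filter.Tendsto (fun b => Real.sinh (k * (T₁ - b))) (𝓝 T₁) (𝓝 0) := by
    have : Continuous (fun b => Real.sinh (k * (T₁ - b))) := by fun_prop
    simpa using this.tendsto T₁
  have hpos : 0 < k / (|c| + 1) := by positivity
  have hev : ∀ᶠ b in 𝓝[<] T₁, Real.sinh (k * (T₁ - b)) < k / (|c| + 1) :=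
    (hlim.eventually (gt_mem_nhds hpos)).filter_mono nhdsWithin_le_nhds
  obtain ⟨b, ⟨hb1, hb2⟩, hb3⟩ := (hev.and (Ioo_mem_nhdsLT hT₁pos)).exists.imp fun b hb =>
    (⟨hb.2, hb.1⟩ : b ∈ Ioo 0 T₁ ∧ Real.sinh (k * (T₁ - b)) < k / (|c| + 1))
  have hbT : b < T := hb2.trans_le hT
  obtain ⟨x, hx⟩ := oh_char (k := k) (M := M) (T₁ := T₁) hγ h hb1.le hbT x₀
    (by rw [hu0]; exact le_ciSup hbdd x₀) hb2 hk (by rw [hu0]; exact hkk) (by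
      rw [hu0, sub_zero, mul_div_assoc, oh_coth hε hkT hroot', hkdef]
      linarith)
  have hS : 0 < Real.sinh (k * (T₁ - b)) :=
    Real.sinh_pos_iff.2 (mul_pos hk (by linarith))
  have hcx := (hc b ⟨hb1.le, hbT⟩ x).trans hx
  rw [le_div_iff₀ hS] at hcx
  rw [lt_div_iff₀ (by positivity)] at hb3
  have hC : 1 ≤ Real.cosh (k * (T₁ - b)) := Real.one_le_cosh _
  have h1 : k ≤ k * Real.cosh (k * (T₁ - b)) := le_mul_of_one_le_right hk.le hC
  have h2 : -|c| * Real.sinh (k * (T₁ - b)) ≤ c * Real.sinh (k * (T₁ - b)) :=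
    mul_le_mul_of_nonneg_right (neg_abs_le c) hS.le
  linarith
end

section
/- Let γ > 0 and let u₀ : ℝ → ℝ be a twice continuously differentiable 1-periodic non-constant even function with ∫₀¹ u₀(x) dx = 0. Then for all sufficiently large positive integers n, the initial data x ↦ u₀(nx) leads to finite-time wave breaking: every periodic classical solution u of the Ostrovsky–Hunter equation on [0,T) with u(0,x) = u₀(nx) and with u_x bounded from below on [0,T) × ℝ has T < ∞. -/
open MeasureTheory Filter Set intervalIntegral

section helpers

variable {γ : ℝ} {u : ℝ → ℝ → ℝ}

lemma oh_slice_x {f : ℝ × ℝ → ℝ} (hf : ContinuousOn f (Set.Ici (0:ℝ) ×ˢ (Set.univ : Set ℝ)))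
    {t : ℝ} (ht : 0 ≤ t) : Continuous (fun x => f (t, x)) := by
  rw [← continuousOn_univ]
  refine hf.comp (by fun_prop) ?_
  intro x _
  exact ⟨ht, mem_univ _⟩

lemma oh_slice_t {f : ℝ × ℝ → ℝ} (hf : ContinuousOn f (Set.Ici (0:ℝ) ×ˢ (Set.univ : Set ℝ)))
    (x : ℝ) : ContinuousOn (fun t => f (t, x)) (Set.Ici 0) := by
  refine hf.comp (by fun_prop) ?_
  intro t ht
  exact ⟨ht, mem_univ _⟩

lemma oh_eqn0 (h : IsPeriodicOHSolution γ (Set.Ici 0) u) (t : ℝ) (ht : 0 ≤ t) (x : ℝ) :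
    deriv (fun y => deriv (fun s => u s y) t) x
      + (deriv (u t) x) ^ 2 + u t x * deriv (deriv (u t)) x = γ * u t x := by
  have c1 := oh_slice_t h.cont_u x
  have c2 := oh_slice_t h.cont_ux x
  have c3 := oh_slice_t h.cont_uxx x
  have c4 := oh_slice_t h.cont_utx x
  have key : Set.EqOn (fun t => deriv (fun y => deriv (fun s => u s y) t) x
      + (deriv (u t) x) ^ 2 + u t x * deriv (deriv (u t)) x) (fun t => γ * u t x) (Ici 0) := by
    refine Set.EqOn.of_subset_closure (s := Ioi 0) ?_ ?_ ?_ Ioi_subset_Ici_self ?_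
    · intro s hs
      exact h.eqn s (mem_Ici.2 (le_of_lt (mem_Ioi.1 hs))) hs x
    · exact (c4.add (c2.pow 2)).add (c1.mul c3)
    · exact continuousOn_const.mul c1
    · rw [closure_Ioi]
  exact key ht

lemma oh_deriv_periodic {f : ℝ → ℝ} (hf : ∀ x, f (x + 1) = f x) (x : ℝ) :
    deriv f (x + 1) = deriv f x := by
  rw [← deriv_comp_add_const]
  congr 1
  funext y
  exact hf y

lemma oh_exists_Icc {f : ℝ → ℝ} (hf : ∀ x, f (x + 1) = f x) (x : ℝ) :
    ∃ y ∈ Icc (0:ℝ) 1, f x = f y := by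
  obtain ⟨y, hy, e⟩ := Function.Periodic.exists_mem_Ico₀ (f := f) (c := 1) hf one_pos x
  exact ⟨y, ⟨hy.1, hy.2.le⟩, e⟩

/-- Time derivative of `u_x` from the right. -/
lemma oh_ux_t (h : IsPeriodicOHSolution γ (Set.Ici 0) u) (t : ℝ) (ht : 0 ≤ t) (x : ℝ) :
    HasDerivWithinAt (fun s => deriv (u s) x)
      (deriv (fun y => deriv (fun s => u s y) t) x) (Ici t) t := by
  set L := deriv (fun y => deriv (fun s => u s y) t) x with hL
  rw [hasDerivWithinAt_iff_isLittleO, Asymptotics.isLittleO_iff]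
  intro ε hε
  have hc := h.cont_utx (t, x) ⟨ht, mem_univ _⟩
  rw [Metric.continuousWithinAt_iff] at hc
  obtain ⟨δ, hδ, hd⟩ := hc ε hε
  have hd' : ∀ s y, 0 ≤ s → |s - t| < δ → |y - x| < δ →
      |deriv (fun y => deriv (fun s => u s y) s) y - L| ≤ ε := by
    intro s y hs h1 h2
    have := hd (x := (s, y)) ⟨hs, mem_univ _⟩
      (by rw [Prod.dist_eq]; exact max_lt h1 h2)
    exact this.le
  have hmem : Ico t (t + δ) ∈ nhdsWithin t (Ici t) := Ico_mem_nhdsGE (by linarith)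
  filter_upwards [hmem] with s hs
  have hts : t ≤ s := hs.1
  have hs0 : 0 ≤ s := ht.trans hts
  rw [Real.norm_eq_abs (s - t), abs_of_nonneg (by linarith)]
  have hder : HasDerivAt (fun y => u s y - u t y - (s - t) * L * y)
      (deriv (u s) x - deriv (u t) x - (s - t) • L) x := by
    have h1 := (h.diff_x s hs0 x).hasDerivAt
    have h2 := (h.diff_x t ht x).hasDerivAt
    have h3 := (hasDerivAt_id x).const_mul ((s - t) * L)
    exact ((h1.sub h2).sub h3).congr_deriv (by simp)
  refine hder.le_of_lip' (by have : 0 ≤ s - t := by linarith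
                             positivity) ?_
  have hball : Metric.ball x δ ∈ nhds x := Metric.ball_mem_nhds _ hδ
  filter_upwards [hball] with y hy
  have hy' : |y - x| < δ := hy
  -- bound of u_t difference
  have hut : ∀ r ∈ Icc t s, ‖(deriv (fun s => u s y) r - deriv (fun s => u s x) r) - L * (y - x)‖
      ≤ ε * ‖y - x‖ := by
    intro r hr
    have hr0 : 0 ≤ r := ht.trans hr.1
    have := Convex.norm_image_sub_le_of_norm_hasDerivWithin_le (𝕜 := ℝ)
      (f := fun z => deriv (fun s => u s z) r - L * z)
      (f' := fun z => deriv (fun z => deriv (fun s => u s z) r) z - L)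
      (s := Metric.ball x δ) (x := x) (y := y) (C := ε) ?_ ?_ (convex_ball _ _)
      (Metric.mem_ball_self hδ) hy
    · refine le_trans (le_of_eq ?_) this
      congr 1
      ring
    · intro z _
      have h3 := (hasDerivAt_id z).const_mul L
      have := (h.diff_tx r hr0 z).hasDerivAt.sub h3
      exact (this.congr_deriv (by simp)).hasDerivWithinAt
    · intro z hz
      refine hd' r z hr0 ?_ hz
      rw [abs_of_nonneg (by linarith [hr.1])]
      linarith [hr.2, hs.2]
  have := Convex.norm_image_sub_le_of_norm_hasDerivWithin_le (𝕜 := ℝ)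
      (f := fun r => (u r y - u r x) - L * (y - x) * r)
      (f' := fun r => (deriv (fun s => u s y) r - deriv (fun s => u s x) r) - L * (y - x))
      (s := Icc t s) (x := t) (y := s) (C := ε * ‖y - x‖) ?_ hut (convex_Icc _ _)
      ⟨le_rfl, hts⟩ ⟨hts, le_rfl⟩
  · rw [Real.norm_eq_abs (s - t), abs_of_nonneg (by linarith : (0:ℝ) ≤ s - t)] at this
    calc _ = ‖(u s y - u s x - L * (y - x) * s) - (u t y - u t x - L * (y - x) * t)‖ := by
          congr 1; ring
      _ ≤ _ := this
      _ = _ := by ring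
  · intro r hr
    have hr0 : 0 ≤ r := ht.trans hr.1
    have h3 := (hasDerivAt_id r).const_mul (L * (y - x))
    have := ((h.diff_t r hr0 y).hasDerivAt.sub (h.diff_t r hr0 x).hasDerivAt).sub h3
    exact (this.congr_deriv (by simp)).hasDerivWithinAt

/-- `u_t` is periodic at positive times. -/
lemma oh_ut_periodic (h : IsPeriodicOHSolution γ (Set.Ici 0) u) (t : ℝ) (ht : 0 < t) (x : ℝ) :
    deriv (fun s => u s (x + 1)) t = deriv (fun s => u s x) t := by
  apply Filter.EventuallyEq.deriv_eq
  filter_upwards [Ioi_mem_nhds ht] with s hs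
  exact h.periodic s (mem_Ici.2 (le_of_lt (mem_Ioi.1 hs))) x

/-- `w = u_t + u u_x` has `w_x = γ u`. -/
lemma oh_w_deriv (h : IsPeriodicOHSolution γ (Set.Ici 0) u) (t : ℝ) (ht : 0 ≤ t) (x : ℝ) :
    HasDerivAt (fun y => deriv (fun s => u s y) t + u t y * deriv (u t) y) (γ * u t x) x := by
  have h1 := (h.diff_tx t ht x).hasDerivAt
  have h2 := (h.diff_x t ht x).hasDerivAt
  have h3 := (h.diff_xx t ht x).hasDerivAt
  have := h1.add (h2.mul h3)
  refine this.congr_deriv ?_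
  rw [← oh_eqn0 h t ht x]
  ring

lemma oh_mean (hγ : 0 < γ) (h : IsPeriodicOHSolution γ (Set.Ici 0) u) (t : ℝ) (ht : 0 < t) :
    ∫ x in (0:ℝ)..1, u t x = 0 := by
  have cu : Continuous (u t) := oh_slice_x h.cont_u ht.le
  have := intervalIntegral.integral_eq_sub_of_hasDerivAt (a := 0) (b := 1)
    (fun x _ => oh_w_deriv h t ht.le x)
    ((continuous_const.mul cu).intervalIntegrable _ _)
  have e1 := oh_ut_periodic h t ht 0
  have e2 := h.periodic t ht.le 0
  have e3 := oh_deriv_periodic (h.periodic t ht.le) 0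
  rw [zero_add] at e1 e2 e3
  rw [e1, e2, e3, sub_self, intervalIntegral.integral_const_mul] at this
  exact (mul_eq_zero.1 this).resolve_left hγ.ne'

lemma oh_mean_ut (hγ : 0 < γ) (h : IsPeriodicOHSolution γ (Set.Ici 0) u) (t : ℝ) (ht : 0 < t) :
    ∫ x in (0:ℝ)..1, deriv (fun s => u s x) t = 0 := by
  have hcomp : IsCompact (Icc (t/2) (2*t) ×ˢ Icc (0:ℝ) 1) := isCompact_Icc.prod isCompact_Icc
  have hsub : Icc (t/2) (2*t) ×ˢ Icc (0:ℝ) 1 ⊆ Ici (0:ℝ) ×ˢ univ := by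
    rintro ⟨a, b⟩ ⟨ha, _⟩
    have := ha.1
    refine ⟨?_, mem_univ _⟩
    simp only [mem_Ici] at *
    linarith
  obtain ⟨C, hC⟩ := hcomp.exists_bound_of_continuousOn (h.cont_ut.mono hsub)
  have hnhds : Icc (t/2) (2*t) ∈ nhds t := Icc_mem_nhds (by linarith) (by linarith)
  have key := intervalIntegral.hasDerivAt_integral_of_dominated_loc_of_deriv_le
    (μ := volume) (a := 0) (b := 1) (F := u) (F' := fun s x => deriv (fun s => u s x) s)
    (x₀ := t) (s := Icc (t/2) (2*t)) (bound := fun _ => C) hnhds ?_ ?_ ?_ ?_ ?_ ?_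
  · have hz : HasDerivAt (fun s => ∫ x in (0:ℝ)..1, u s x) 0 t := by
      refine (hasDerivAt_const t (0:ℝ)).congr_of_eventuallyEq ?_
      filter_upwards [Ioi_mem_nhds ht] with s hs
      exact oh_mean hγ h s hs
    exact key.2.unique hz
  · filter_upwards [Ioi_mem_nhds ht] with s hs
    have : Continuous (u s) := oh_slice_x h.cont_u (le_of_lt hs)
    exact this.aestronglyMeasurable
  · have : Continuous (u t) := oh_slice_x h.cont_u ht.le
    exact this.intervalIntegrable _ _
  · have : Continuous (fun x => deriv (fun s => u s x) t) := oh_slice_x h.cont_ut ht.le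
    exact this.aestronglyMeasurable
  · refine ae_of_all _ ?_
    intro x hx s hs
    rw [uIoc_of_le zero_le_one] at hx
    exact hC (s, x) ⟨hs, hx.1.le, hx.2⟩
  · exact intervalIntegrable_const
  · refine ae_of_all _ ?_
    intro x hx s hs
    exact (h.diff_t s (by have := hs.1; simp only [mem_Ici]; linarith) x).hasDerivAt

lemma oh_w_zero (hγ : 0 < γ) (h : IsPeriodicOHSolution γ (Set.Ici 0) u) (t : ℝ) (ht : 0 < t) :
    ∃ z ∈ Icc (0:ℝ) 1, deriv (fun s => u s z) t + u t z * deriv (u t) z = 0 := by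
  have c1 : Continuous (fun x => deriv (fun s => u s x) t) := oh_slice_x h.cont_ut ht.le
  have c2 : Continuous (u t) := oh_slice_x h.cont_u ht.le
  have c3 : Continuous (deriv (u t)) := oh_slice_x h.cont_ux ht.le
  have hw : ∫ x in (0:ℝ)..1, (deriv (fun s => u s x) t + u t x * deriv (u t) x) = 0 := by
    rw [intervalIntegral.integral_add (g := fun x => u t x * deriv (u t) x) (c1.intervalIntegrable _ _)
      ((c2.mul c3).intervalIntegrable _ _), oh_mean_ut hγ h t ht, zero_add]
    have := intervalIntegral.integral_eq_sub_of_hasDerivAt (a := 0) (b := 1)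
      (f := fun x => u t x ^ 2 / 2) (f' := fun x => u t x * deriv (u t) x) ?_
      ((c2.mul c3).intervalIntegrable _ _)
    · rw [this]
      have e2 := h.periodic t ht.le 0
      rw [zero_add] at e2
      simp [e2]
    · intro x _
      have h2 := (((h.diff_x t ht.le x).hasDerivAt).pow 2).div_const 2
      refine h2.congr_deriv ?_
      simp
      ring
  obtain ⟨z, hz, e⟩ := exists_eq_interval_average (a := 0) (b := 1)
    (f := fun x => deriv (fun s => u s x) t + u t x * deriv (u t) x) (by norm_num)
    (c1.add (c2.mul c3)).continuousOn
  refine ⟨z, ?_, ?_⟩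
  · have := uIoo_subset_uIcc_self hz
    rwa [uIcc_of_le zero_le_one] at this
  · rw [interval_average_eq, hw] at e
    simpa using e

lemma oh_back {g : ℝ → ℝ} {g' t : ℝ} (ht : 0 < t) (hg : HasDerivAt g g' t)
    (hpos : ∀ s, 0 ≤ s → s < t → 0 < g s) (h0 : g t ≤ 0) : g' ≤ 0 := by
  by_contra! hc
  have h1 := (hasDerivAt_iff_tendsto_slope.1 hg).eventually (lt_mem_nhds hc)
  have h2 : ∀ᶠ s in nhdsWithin t (Iio t), 0 < slope g t s :=
    h1.filter_mono (nhdsWithin_mono _ (fun s hs => ne_of_lt hs))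
  have h3 : Ioo 0 t ∈ nhdsWithin t (Iio t) := Ioo_mem_nhdsLT ht
  obtain ⟨s, hs1, hs2⟩ := (h2.and h3).exists
  have := hpos s hs2.1.le hs2.2
  rw [slope_def_field] at hs1
  have h4 : (g s - g t) / (s - t) < 0 :=
    div_neg_of_pos_of_neg (by linarith) (by linarith [hs2.2])
  linarith

/-- Sup norm barrier. -/
lemma oh_bound (hγ : 0 < γ) (h : IsPeriodicOHSolution γ (Set.Ici 0) u) {A : ℝ}
    (hA : ∀ x, |u 0 x| < A) (t : ℝ) (ht : t ∈ Icc (0:ℝ) 1) (x : ℝ) :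
    |u t x| < A * Real.exp (2 * γ * t) := by
  have hA0 : 0 < A := (abs_nonneg _).trans_lt (hA 0)
  set B : ℝ → ℝ := fun t => A * Real.exp (2 * γ * t) with hB
  have hBc : Continuous B := by fun_prop
  have hBpos : ∀ t, 0 < B t := fun t => by positivity
  by_contra! hcon
  have hcon' : B t ≤ |u t x| := hcon
  let P : Set (ℝ × ℝ) := {p | p ∈ Icc (0:ℝ) 1 ×ˢ Icc (0:ℝ) 1 ∧ B p.1 ≤ |u p.1 p.2|}
  have hsub : Icc (0:ℝ) 1 ×ˢ Icc (0:ℝ) 1 ⊆ Ici (0:ℝ) ×ˢ univ := by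
    rintro ⟨a, b⟩ ⟨ha, _⟩
    exact ⟨ha.1, mem_univ _⟩
  have hPcl : IsClosed P := by
    refine IsClosed.isClosed_le (isClosed_Icc.prod isClosed_Icc)
      (hBc.comp continuous_fst).continuousOn ?_
    exact (h.cont_u.mono hsub).abs
  have hPc : IsCompact P := (isCompact_Icc.prod isCompact_Icc).of_isClosed_subset hPcl
    (fun p hp => hp.1)
  have hne : (Prod.fst '' P).Nonempty := by
    obtain ⟨y, hy, e⟩ := oh_exists_Icc (h.periodic t ht.1) x
    exact ⟨t, (t, y), ⟨⟨ht, hy⟩, by rw [e] at hcon'; exact hcon'⟩, rfl⟩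
  obtain ⟨t0, ht0, hleast⟩ := (hPc.image continuous_fst).exists_isLeast hne
  obtain ⟨⟨t0', x0⟩, ⟨⟨hti, hx0⟩, hp⟩, rfl⟩ := ht0
  dsimp only at hti hx0 hp hleast ⊢
  have hlt : ∀ s, 0 ≤ s → s < t0' → ∀ y, |u s y| < B s := by
    intro s hs0 hst y
    by_contra! hc
    obtain ⟨y', hy', e⟩ := oh_exists_Icc (h.periodic s hs0) y
    have : t0' ≤ s := hleast ⟨(s, y'), ⟨⟨⟨hs0, hst.le.trans hti.2⟩, hy'⟩, by rw [e] at hc; exact hc⟩, rfl⟩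
    linarith
  have ht0pos : 0 < t0' := by
    rcases hti.1.eq_or_lt with e | e
    · exfalso
      rw [← e] at hp
      have := hA x0
      simp [hB] at hp
      linarith
    · exact e
  have hle : ∀ y, |u t0' y| ≤ B t0' := by
    intro y
    have hcl : t0' ∈ closure (Ico 0 t0') := by
      rw [closure_Ico ht0pos.ne]
      exact ⟨ht0pos.le, le_rfl⟩
    refine ContinuousWithinAt.closure_le (s := Ico 0 t0') (f := fun s => |u s y|) (g := B) hcl ?_
      hBc.continuousWithinAt (fun s hs => (hlt s hs.1 hs.2 y).le)
    have := (oh_slice_t h.cont_u y).abs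
    exact (this t0' ht0pos.le).mono (fun s hs => hs.1)
  -- sign
  obtain ⟨σ, hσ, hσu⟩ : ∃ σ : ℝ, |σ| = 1 ∧ σ * u t0' x0 = |u t0' x0| := by
    rcases le_total 0 (u t0' x0) with h1 | h1
    · exact ⟨1, by simp, by rw [abs_of_nonneg h1]; ring⟩
    · exact ⟨-1, by simp, by rw [abs_of_nonpos h1]; ring⟩
  have hσle : ∀ a, σ * a ≤ |a| := by
    intro a
    calc σ * a ≤ |σ * a| := le_abs_self _
      _ = |a| := by rw [abs_mul, hσ, one_mul]
  have hux : deriv (u t0') x0 = 0 := by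
    have hmax : IsLocalMax (fun y => σ * u t0' y) x0 := by
      refine Filter.Eventually.of_forall (fun y => ?_)
      dsimp only
      rw [hσu]
      exact (hσle _).trans ((hle y).trans hp)
    have h0 := hmax.hasDerivAt_eq_zero ((h.diff_x t0' ht0pos.le x0).hasDerivAt.const_mul σ)
    have : σ ≠ 0 := by
      rintro rfl
      simp at hσ
    exact (mul_eq_zero.1 h0).resolve_left this
  have hut : |deriv (fun s => u s x0) t0'| ≤ γ * B t0' := by
    obtain ⟨z, hz, hz0⟩ := oh_w_zero hγ h t0' ht0pos
    have := Convex.norm_image_sub_le_of_norm_hasDerivWithin_le (𝕜 := ℝ)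
      (f := fun y => deriv (fun s => u s y) t0' + u t0' y * deriv (u t0') y)
      (f' := fun y => γ * u t0' y)
      (s := univ) (x := z) (y := x0) (C := γ * B t0')
      (fun y _ => (oh_w_deriv h t0' ht0pos.le y).hasDerivWithinAt) ?_ convex_univ
      (mem_univ _) (mem_univ _)
    · rw [hz0, hux, mul_zero, add_zero, sub_zero, Real.norm_eq_abs, Real.norm_eq_abs] at this
      refine this.trans ?_
      have h1 : |x0 - z| ≤ 1 := by
        rw [abs_le]
        constructor <;> linarith [hx0.1, hx0.2, hz.1, hz.2]
      have h2 : 0 ≤ γ * B t0' := by have := hBpos t0'; positivity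
      nlinarith
    · intro y _
      rw [Real.norm_eq_abs, abs_mul, abs_of_pos hγ]
      exact mul_le_mul_of_nonneg_left (hle y) hγ.le
  have hBd : HasDerivAt B (2 * γ * B t0') t0' := by
    have h1 := (((hasDerivAt_id t0').const_mul (2 * γ)).exp).const_mul A
    refine h1.congr_deriv ?_
    simp [hB]
    ring
  have hfin := oh_back ht0pos
    (hBd.sub ((h.diff_t t0' ht0pos.le x0).hasDerivAt.const_mul σ))
    (by
      intro s hs0 hst
      have h1 := hlt s hs0 hst x0
      have h2 := hσle (u s x0)
      simp only [Pi.sub_apply]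
      linarith)
    (by
      simp only [Pi.sub_apply]
      rw [hσu]; linarith)
  have h3 := hσle (deriv (fun s => u s x0) t0')
  have h4 : 0 < γ * B t0' := mul_pos hγ (hBpos _)
  linarith

/-- Riccati comparison for the minimum of `u_x`. -/
lemma oh_riccati_s9 (h : IsPeriodicOHSolution γ (Set.Ici 0) u) (hγ : 0 < γ) {K δ ε : ℝ}
    (hK : ∀ t ∈ Icc (0:ℝ) 1, ∀ x, |u t x| ≤ K) (hδ : δ ≤ 1/2) (hε : 0 < ε) (hεδ : ε ≤ δ)
    (hδK : 2 * γ * K * δ ^ 2 < 1)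
    (h0 : ∃ x, deriv (u 0) x ≤ - δ⁻¹) : ∃ t ∈ Icc (0:ℝ) 1, ∃ x, deriv (u t) x ≤ - ε⁻¹ := by
  set T := 2 * (δ - ε) with hT
  have hT0 : 0 ≤ T := by linarith
  have hT1 : T ≤ 1 := by linarith
  set b : ℝ → ℝ := fun t => - (δ - t / 2)⁻¹ with hb
  have hden : ∀ t ∈ Icc 0 T, 0 < δ - t / 2 := by
    intro t ht
    linarith [ht.2]
  have hbc : ContinuousOn b (Icc 0 T) := by
    refine ContinuousOn.neg (ContinuousOn.inv₀ (by fun_prop) ?_)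
    intro t ht
    exact (hden t ht).ne'
  let S : Set ℝ := {t | ∃ x ∈ Icc (0:ℝ) 1, deriv (u t) x ≤ b t}
  have hSall : Icc 0 T ⊆ S := by
    refine IsClosed.Icc_subset_of_forall_exists_gt ?_ ?_ ?_
    · let P : Set (ℝ × ℝ) := {p | p ∈ Icc (0:ℝ) T ×ˢ Icc (0:ℝ) 1 ∧ deriv (u p.1) p.2 ≤ b p.1}
      have hsub : Icc (0:ℝ) T ×ˢ Icc (0:ℝ) 1 ⊆ Ici (0:ℝ) ×ˢ univ := by
        rintro ⟨a, c⟩ ⟨ha, _⟩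
        exact ⟨ha.1, mem_univ _⟩
      have hPcl : IsClosed P := by
        refine IsClosed.isClosed_le (isClosed_Icc.prod isClosed_Icc)
          (h.cont_ux.mono hsub) ?_
        exact hbc.comp continuous_fst.continuousOn (fun p hp => hp.1)
      have hPc : IsCompact P := (isCompact_Icc.prod isCompact_Icc).of_isClosed_subset hPcl
        (fun p hp => hp.1)
      have e : S ∩ Icc 0 T = Prod.fst '' P := by
        ext s
        constructor
        · rintro ⟨⟨x, hx, hxs⟩, hs⟩
          exact ⟨(s, x), ⟨⟨hs, hx⟩, hxs⟩, rfl⟩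
        · rintro ⟨⟨s, x⟩, ⟨⟨hs, hx⟩, hxs⟩, rfl⟩
          exact ⟨⟨x, hx, hxs⟩, hs⟩
      rw [e]
      exact (hPc.image continuous_fst).isClosed
    · obtain ⟨x, hx⟩ := h0
      obtain ⟨y, hy, e⟩ := oh_exists_Icc (oh_deriv_periodic (h.periodic 0 (le_refl (0:ℝ)))) x
      refine ⟨y, hy, ?_⟩
      rw [← e]
      simpa [hb] using hx
    · rintro t ⟨⟨x0, hx0, hx0b⟩, ht⟩ y hy
      have ht0 : 0 ≤ t := ht.1
      have htI : t ∈ Icc 0 T := ⟨ht.1, ht.2.le⟩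
      have c3 : Continuous (deriv (u t)) := oh_slice_x h.cont_ux ht0
      obtain ⟨x1, hx1, hmin⟩ := isCompact_Icc.exists_isMinOn (s := Icc (0:ℝ) 1) ⟨x0, hx0⟩
        c3.continuousOn
      have hmin' : ∀ z, deriv (u t) x1 ≤ deriv (u t) z := by
        intro z
        obtain ⟨z', hz', e⟩ := oh_exists_Icc (oh_deriv_periodic (h.periodic t ht0)) z
        rw [e]
        exact hmin hz'
      have huxx : deriv (deriv (u t)) x1 = 0 := by
        have : IsLocalMin (deriv (u t)) x1 := Filter.Eventually.of_forall hmin'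
        exact this.deriv_eq_zero
      have hle : deriv (u t) x1 ≤ b t := (hmin' x0).trans hx0b
      have heq := oh_eqn0 h t ht0 x1
      rw [huxx, mul_zero, add_zero] at heq
      have hd1 := oh_ux_t h t ht0 x1
      have hdt := hden t htI
      have hbd : HasDerivAt b (- (b t ^ 2) / 2) t := by
        have h1 : HasDerivAt (fun t : ℝ => δ - t / 2) (-(1/2)) t := by
          simpa using ((hasDerivAt_id t).div_const 2).const_sub δ
        have h2 := (h1.inv hdt.ne').neg
        refine h2.congr_deriv ?_
        simp only [hb]
        field_simp
      have hev : ∀ᶠ s in nhdsWithin t (Ioi t), deriv (u s) x1 ≤ b s := by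
        rcases hle.lt_or_eq with hlt | he
        · have hf := (hd1.continuousWithinAt.mono Ioi_subset_Ici_self)
          have hg := hbd.continuousAt.continuousWithinAt (s := Ioi t)
          filter_upwards [hf.eventually_lt hg hlt] with s hs
          exact hs.le
        · have hd2 := hd1.sub hbd.hasDerivWithinAt
          have hneg : deriv (fun y => deriv (fun s => u s y) t) x1 - (- (b t ^ 2) / 2) < 0 := by
            rw [he] at heq
            have h1 : u t x1 ≤ K := (le_abs_self _).trans (hK t ⟨ht0, htI.2.trans hT1⟩ x1)
            have h2 : γ * u t x1 ≤ γ * K := mul_le_mul_of_nonneg_left h1 hγ.le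
            have hK0 : 0 ≤ K := (abs_nonneg _).trans (hK t ⟨ht0, htI.2.trans hT1⟩ x1)
            have h3 : 2 * γ * K < b t ^ 2 := by
              have e : b t ^ 2 = 1 / (δ - t/2) ^ 2 := by
                simp only [hb]; field_simp
              rw [e, lt_div_iff₀ (by positivity)]
              refine lt_of_le_of_lt ?_ hδK
              have : (δ - t/2) ^ 2 ≤ δ ^ 2 := by
                apply pow_le_pow_left₀ hdt.le; linarith
              exact mul_le_mul_of_nonneg_left this (by positivity)
            linarith
          have h5 := hd2.limsup_slope_le hneg
          rw [Ici_sdiff_left] at h5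
          filter_upwards [h5, self_mem_nhdsWithin] with s hs hst
          have hst' : t < s := hst
          rw [slope_def_field] at hs
          simp only [Pi.sub_apply] at hs
          rw [he, sub_self, sub_zero] at hs
          by_contra! hc
          have : 0 < (deriv (u s) x1 - b s) / (s - t) := div_pos (by linarith) (by linarith)
          linarith
      obtain ⟨s, hs1, hs2⟩ := (hev.and (Ioc_mem_nhdsGT (show t < y from hy))).exists
      exact ⟨s, ⟨x1, hx1, hs1⟩, hs2⟩
  obtain ⟨x, hx, hxb⟩ := hSall ⟨hT0, le_rfl⟩
  refine ⟨T, ⟨hT0, hT1⟩, x, ?_⟩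
  have : b T = - ε⁻¹ := by
    simp only [hb, hT]; congr 2; ring
  rwa [this] at hxb

end helpers

/-- for a nonconstant even mean-zero `u₀` and all large `n`, the
initial data `x ↦ u₀(nx)` leads to finite-time wave breaking: no periodic
classical solution with this data and `u_x` bounded from below is global. -/
theorem wave_breaking_scaled_even
    (γ : ℝ) (hγ : 0 < γ) (u₀ : ℝ → ℝ) (hreg : ContDiff ℝ 2 u₀)
    (hper : ∀ x : ℝ, u₀ (x + 1) = u₀ x)
    (heven : ∀ x : ℝ, u₀ (-x) = u₀ x)
    (hnonconst : ∃ x y : ℝ, u₀ x ≠ u₀ y)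
    (hmean : (∫ x in (0:ℝ)..1, u₀ x) = 0) :
    ∃ N : ℕ, ∀ n : ℕ, N ≤ n →
      ∀ u : ℝ → ℝ → ℝ,
        IsPeriodicOHSolution γ (Set.Ici 0) u →
        (∀ x : ℝ, u 0 x = u₀ ((n : ℝ) * x)) →
        ¬ ∃ c : ℝ, ∀ t ∈ Set.Ici (0 : ℝ), ∀ x : ℝ, c ≤ deriv (u t) x := by
  obtain ⟨y, hy⟩ : ∃ y, deriv u₀ y < 0 := by
    by_contra! hc
    have hmono : Monotone u₀ := monotone_of_deriv_nonneg (hreg.differentiable (by norm_num)) hc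
    have hP : Function.Periodic u₀ 1 := hper
    have hle : ∀ a b, u₀ a ≤ u₀ b := by
      intro a b
      obtain ⟨k, hk⟩ := exists_nat_ge (a - b)
      have h1 : u₀ (b + k) = u₀ b := by simpa using (hP.nat_mul k) b
      rw [← h1]
      exact hmono (by linarith)
    obtain ⟨a, b, hab⟩ := hnonconst
    exact hab (le_antisymm (hle a b) (hle b a))
  obtain ⟨C, hC⟩ := (isCompact_Icc (a := (0:ℝ)) (b := 1)).exists_bound_of_continuousOn
    hreg.continuous.continuousOn
  have hC' : ∀ x, |u₀ x| < C + 1 := by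
    intro x
    obtain ⟨z, hz, e⟩ := oh_exists_Icc hper x
    rw [e]
    have := hC z hz
    rw [Real.norm_eq_abs] at this
    linarith
  set A := C + 1 with hA
  have hA0 : 0 < A := (abs_nonneg _).trans_lt (hC' 0)
  set K := A * Real.exp (2 * γ) with hKdef
  have hK0 : 0 < K := by positivity
  obtain ⟨δ, hδ0, hδ, hδK⟩ : ∃ δ : ℝ, 0 < δ ∧ δ ≤ 1/2 ∧ 2 * γ * K * δ ^ 2 < 1 := by
    have hp : 0 < 2 * γ * K := by positivity
    refine ⟨1 / (2 * γ * K + 2), by positivity, ?_, ?_⟩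
    · rw [div_le_div_iff₀ (by positivity) (by norm_num)]
      linarith
    · rw [div_pow, one_pow, mul_one_div, div_lt_one (by positivity)]
      nlinarith
  obtain ⟨N, hN⟩ := exists_nat_ge (δ⁻¹ / (- deriv u₀ y))
  refine ⟨N + 1, fun n hn u h hu0 => ?_⟩
  rintro ⟨c, hc⟩
  have hn1 : (N : ℝ) + 1 ≤ n := by exact_mod_cast hn
  have hnpos : (0:ℝ) < n := by
    have : (0:ℝ) ≤ N := Nat.cast_nonneg _
    linarith
  have hb : ∀ t ∈ Icc (0:ℝ) 1, ∀ x, |u t x| ≤ K := by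
    intro t ht x
    refine (oh_bound hγ h (A := A) (fun x => by rw [hu0]; exact hC' _) t ht x).le.trans ?_
    refine mul_le_mul_of_nonneg_left (Real.exp_le_exp.2 ?_) hA0.le
    nlinarith [ht.2]
  have hini : ∃ x, deriv (u 0) x ≤ - δ⁻¹ := by
    refine ⟨y / n, ?_⟩
    have e : u 0 = fun x => u₀ (n * x) := funext hu0
    rw [e, deriv_comp_mul_left, mul_div_cancel₀ _ hnpos.ne', smul_eq_mul]
    have h1 : δ⁻¹ / (- deriv u₀ y) ≤ n := by linarith
    rw [div_le_iff₀ (by linarith)] at h1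
    linarith
  obtain ⟨t, ht, x, hx⟩ := oh_riccati_s9 h hγ hb hδ (ε := min δ (1 / (|c| + 1)))
    (lt_min hδ0 (by positivity)) (min_le_left _ _) hδK hini
  have h1 := hc t ht.1 x
  have h2 : |c| + 1 ≤ (min δ (1 / (|c| + 1)))⁻¹ := by
    rw [le_inv_comm₀ (by positivity) (lt_min hδ0 (by positivity)), ← one_div]
    exact min_le_right _ _
  linarith [neg_abs_le c]
end
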